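/- arXiv:1411.0363 — 3 statements merged into one kernel-verified Lean document; each statement's English description precedes it below -/
import Mathlib

section
/- Let U ⊆ ℂⁿ be a domain and f a holomorphic function on U that is essentially unbounded on ∂U. Then U is a domain of holomorphy. -/
open Set Metric Filter Topology

/-- A function `f`, holomorphic on the open set `U ⊆ ℂⁿ`, extends holomorphically to a point
`a`: there is a connected open neighbourhood `V` of `a` and a holomorphic `g` on `V` agreeing
with `f` on a nonempty open subset of `U ∩ V`. -/
def ExtendsHolomorphicallyTo {n : ℕ} (U : Set (Fin n → ℂ)) (f : (Fin n → ℂ) → ℂ)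
    (a : Fin n → ℂ) : Prop :=
  ∃ V : Set (Fin n → ℂ), IsOpen V ∧ IsConnected V ∧ a ∈ V ∧
    ∃ g : (Fin n → ℂ) → ℂ, DifferentiableOn ℂ g V ∧
      ∃ W : Set (Fin n → ℂ), IsOpen W ∧ W.Nonempty ∧ W ⊆ U ∩ V ∧ Set.EqOn f g W

/-- `U ⊆ ℂⁿ` is a domain of holomorphy: it is a domain (connected open set) and there exists a
holomorphic function on `U` which does not extend holomorphically to any point of `Uᶜ`. -/
def IsDomainOfHolomorphy {n : ℕ} (U : Set (Fin n → ℂ)) : Prop :=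
  IsOpen U ∧ IsConnected U ∧
    ∃ f : (Fin n → ℂ) → ℂ, DifferentiableOn ℂ f U ∧
      ∀ a ∈ Uᶜ, ¬ ExtendsHolomorphicallyTo U f a

/-!
Suppose a holomorphic `g` on a connected open set `V ⊄ U` agrees with `f` near a point of `U ∩ V`.
By the identity theorem `f = g` on the whole component `C` of `U ∩ V` through that point. As `V` is
connected, `C` accumulates at some `b ∈ V ∩ ∂U`. The continuous function `g` is bounded on a small
connected neighbourhood `N ⊆ V` of `b`, while `f` is unbounded on each component of `U ∩ N`,
including one that lies in `C`.
-/

section Components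

variable {X : Type*} [TopologicalSpace X]

lemma closure_connectedComponentIn_inter_subset (S : Set X) (x : X) :
    closure (connectedComponentIn S x) ∩ S ⊆ connectedComponentIn S x := by
  by_cases hx : x ∈ S
  · exact (isPreconnected_connectedComponentIn.subset_closure
      (subset_inter subset_closure (connectedComponentIn_subset S x))
      inter_subset_left).subset_connectedComponentIn
        ⟨subset_closure (mem_connectedComponentIn hx), hx⟩ inter_subset_right
  · simp [connectedComponentIn_eq_empty hx]

lemma exists_mem_frontier_inter_closure_connectedComponentIn [LocallyConnectedSpace X]
    {U V : Set X} (hU : IsOpen U) (hV : IsOpen V) (hVc : IsPreconnected V) (hVU : ¬V ⊆ U)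
    {x : X} (hx : x ∈ U ∩ V) :
    ∃ b ∈ V ∩ frontier U, b ∈ closure (connectedComponentIn (U ∩ V) x) := by
  set C := connectedComponentIn (U ∩ V) x
  have hCUV : C ⊆ U ∩ V := connectedComponentIn_subset _ _
  obtain ⟨b, ⟨hbC, hbV⟩, hb⟩ : ∃ b ∈ closure C ∩ V, b ∉ C := by
    rw [← not_subset]
    intro hC
    have hVC : V ⊆ C := hVc.subset_of_closure_inter_subset (hU.inter hV).connectedComponentIn
      ⟨x, hx.2, mem_connectedComponentIn hx⟩ hC
    exact hVU fun y hy => (hCUV (hVC hy)).1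
  have hbU : b ∉ U := fun hbU =>
    hb (closure_connectedComponentIn_inter_subset _ _ ⟨hbC, hbU, hbV⟩)
  have hbU' : b ∈ closure U := closure_mono (fun y hy => (hCUV hy).1) hbC
  exact ⟨b, ⟨hbV, hU.frontier_eq ▸ ⟨hbU', hbU⟩⟩, hbC⟩

end Components

section IdentityTheorem

variable {E F : Type*} [NormedAddCommGroup E] [NormedSpace ℂ E] [NormedAddCommGroup F]
  [NormedSpace ℂ F] [CompleteSpace F] {f g : E → F} {C : Set E} {z : E}

lemma eqOn_of_differentiableOn_of_convex_of_eventuallyEq (hf : DifferentiableOn ℂ f C)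
    (hg : DifferentiableOn ℂ g C) (hC : IsOpen C) (hCc : Convex ℝ C) (hz : z ∈ C)
    (hfg : f =ᶠ[𝓝 z] g) : EqOn f g C := by
  intro q hq
  let line : ℂ → E := fun t => z + t • (q - z)
  have hline : Differentiable ℂ line := by fun_prop
  have hline0 : line 0 = z := by simp [line]
  have hline1 : line 1 = q := by simp [line]
  have hopen : IsOpen (line ⁻¹' C) := hC.preimage hline.continuous
  have hconvex : Convex ℝ (line ⁻¹' C) := (hCc.translate_preimage_right z).linear_preimage
    ((LinearMap.toSpanSingleton ℂ E (q - z)).restrictScalars ℝ)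
  have hanalytic {h : E → F} (hh : DifferentiableOn ℂ h C) :
      AnalyticOnNhd ℂ (h ∘ line) (line ⁻¹' C) :=
    (hh.comp hline.differentiableOn (mapsTo_preimage _ _)).analyticOnNhd hopen
  have hnear : f ∘ line =ᶠ[𝓝 0] g ∘ line :=
    (hline.continuous.tendsto' 0 z hline0).eventually hfg
  have heq : EqOn (f ∘ line) (g ∘ line) (line ⁻¹' C) :=
    (hanalytic hf).eqOn_of_preconnected_of_eventuallyEq (hanalytic hg) hconvex.isPreconnected
      (by rwa [mem_preimage, hline0]) hnear
  have hq1 : (1 : ℂ) ∈ line ⁻¹' C := by rwa [mem_preimage, hline1]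
  simpa only [Function.comp_apply, hline1] using heq hq1

lemma eqOn_of_differentiableOn_of_isPreconnected_of_eventuallyEq (hf : DifferentiableOn ℂ f C)
    (hg : DifferentiableOn ℂ g C) (hC : IsOpen C) (hCc : IsPreconnected C) (hz : z ∈ C)
    (hfg : f =ᶠ[𝓝 z] g) : EqOn f g C := by
  suffices C ⊆ {p | f =ᶠ[𝓝 p] g} from fun q hq => (this hq).eq_of_nhds
  refine hCc.subset_of_closure_inter_subset isOpen_setOfPred_eventually_nhds ⟨z, hz, hfg⟩ ?_
  rintro p ⟨hp, hpC⟩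
  obtain ⟨r, hr, hball⟩ := isOpen_iff.1 hC p hpC
  obtain ⟨y, hy, hyfg⟩ := mem_closure_iff.1 hp (ball p r) isOpen_ball (mem_ball_self hr)
  exact (eqOn_of_differentiableOn_of_convex_of_eventuallyEq (hf.mono hball) (hg.mono hball)
    isOpen_ball (convex_ball p r) hy hyfg).eventuallyEq_of_mem (ball_mem_nhds p hr)

end IdentityTheorem

/-- The function `f` is essentially unbounded on `∂U`: for every domain `V` meeting `∂U`, it is
unbounded on every connected component of `U ∩ V`. A component is encoded as
`connectedComponentIn (U ∩ V) x` for some `x ∈ U ∩ V`. -/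
def IsEssentiallyUnboundedOnFrontier {X F : Type*} [TopologicalSpace X] [Norm F] (U : Set X)
    (f : X → F) : Prop :=
  ∀ V : Set X, IsOpen V → IsConnected V → (V ∩ frontier U).Nonempty →
    ∀ x ∈ U ∩ V, ∃ z : ℕ → X,
      (∀ j, z j ∈ connectedComponentIn (U ∩ V) x) ∧ Tendsto (fun j => ‖f (z j)‖) atTop atTop

namespace IsEssentiallyUnboundedOnFrontier

lemma not_continuousAt_of_eqOn {X F : Type*} [TopologicalSpace X] [LocallyConnectedSpace X]
    [SeminormedAddGroup F] {U V : Set X} {f g : X → F} {b x : X}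
    (hf : IsEssentiallyUnboundedOnFrontier U f) (hV : V ∈ 𝓝 b) (hbU : b ∈ frontier U)
    (hb : b ∈ closure (connectedComponentIn (U ∩ V) x))
    (hfg : EqOn f g (connectedComponentIn (U ∩ V) x)) : ¬ContinuousAt g b := by
  intro hg
  have hbound : ∀ᶠ y in 𝓝 b, ‖g y‖ < ‖g b‖ + 1 :=
    hg.norm.eventually_lt_const (lt_add_one _)
  obtain ⟨N, hN, hNo, hbN, hNc⟩ :=
    locallyConnectedSpace_iff_subsets_isOpen_isConnected.1 ‹_› b _ (inter_mem hbound hV)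
  obtain ⟨y, hyN, hyC⟩ := mem_closure_iff.1 hb N hNo hbN
  have hyU : y ∈ U := (connectedComponentIn_subset _ _ hyC).1
  obtain ⟨u, hu, hu_tendsto⟩ := hf N hNo hNc ⟨b, hbN, hbU⟩ y ⟨hyU, hyN⟩
  obtain ⟨j, hj⟩ := (hu_tendsto.eventually_ge_atTop (‖g b‖ + 1)).exists
  have huN : u j ∈ N := (connectedComponentIn_subset _ _ (hu j)).2
  have huC : u j ∈ connectedComponentIn (U ∩ V) x := by
    rw [connectedComponentIn_eq hyC]
    exact connectedComponentIn_mono y (inter_subset_inter_right U fun p hp => (hN hp).2) (hu j)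
  rw [hfg huC] at hj
  exact hj.not_gt (hN huN).1

end IsEssentiallyUnboundedOnFrontier

theorem essentially_unbounded_isDomainOfHolomorphy_general {E F : Type*} [NormedAddCommGroup E]
    [NormedSpace ℂ E] [NormedAddCommGroup F] [NormedSpace ℂ F] [CompleteSpace F]
    {U V : Set E} {f g : E → F} {w : E} (hU : IsOpen U) (hf : DifferentiableOn ℂ f U)
    (hess : IsEssentiallyUnboundedOnFrontier U f) (hV : IsOpen V) (hVc : IsPreconnected V)
    (hg : DifferentiableOn ℂ g V) (hw : w ∈ U ∩ V) (hfg : f =ᶠ[𝓝 w] g) : V ⊆ U := by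
  by_contra hVU
  have hC : connectedComponentIn (U ∩ V) w ⊆ U ∩ V := connectedComponentIn_subset _ _
  have hfgC : EqOn f g (connectedComponentIn (U ∩ V) w) :=
    eqOn_of_differentiableOn_of_isPreconnected_of_eventuallyEq
      (hf.mono (hC.trans inter_subset_left)) (hg.mono (hC.trans inter_subset_right))
      (hU.inter hV).connectedComponentIn isPreconnected_connectedComponentIn
      (mem_connectedComponentIn hw) hfg
  obtain ⟨b, ⟨hbV, hbU⟩, hb⟩ :=
    exists_mem_frontier_inter_closure_connectedComponentIn hU hV hVc hVU hw
  have hV_nhds : V ∈ 𝓝 b := hV.mem_nhds hbV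
  exact hess.not_continuousAt_of_eqOn hV_nhds hbU hb hfgC (hg.continuousOn.continuousAt hV_nhds)

/-- If `f` is holomorphic on the domain `U` and essentially unbounded on `∂U` (for every domain
`V` meeting `∂U` and every connected component `W` of `U ∩ V` there is a sequence in `W` on which
`|f| → ∞`), then `U` is a domain of holomorphy. -/
theorem essentially_unbounded_isDomainOfHolomorphy {n : ℕ} (U : Set (Fin n → ℂ))
    (hUo : IsOpen U) (hUc : IsConnected U)
    (f : (Fin n → ℂ) → ℂ) (hf : DifferentiableOn ℂ f U)
    (hess : ∀ V : Set (Fin n → ℂ), IsOpen V → IsConnected V → (V ∩ frontier U).Nonempty →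
      ∀ x ∈ U ∩ V, ∃ z : ℕ → (Fin n → ℂ),
        (∀ j, z j ∈ connectedComponentIn (U ∩ V) x) ∧
          Tendsto (fun j => ‖f (z j)‖) atTop atTop) :
    IsDomainOfHolomorphy U := by
  refine ⟨hUo, hUc, f, hf, ?_⟩
  rintro a ha ⟨V, hVo, hVc, haV, g, hg, W, hWo, ⟨w, hw⟩, hWUV, hfg⟩
  exact ha (essentially_unbounded_isDomainOfHolomorphy_general hUo hf hess hVo hVc.isPreconnected
    hg (hWUV hw) (hfg.eventuallyEq_of_mem (hWo.mem_nhds hw)) haV)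
end

section
/- Let U ⊆ ℂⁿ be a domain and suppose that for each boundary point a ∈ ∂U there is a holomorphic function f_a on U tending to ∞ at a, i.e. for every sequence {z_j} ⊆ U with z_j → a one has |f_a(z_j)| → ∞. Then U is a domain of holomorphy. -/
open Set Metric Filter Topology

/-!
If `U ≠ ℂⁿ`, every ball `B_q` centred at `q ∈ U` with radius the distance from `q` to the complement
of `U` touches `∂U`, so by hypothesis some holomorphic function is unbounded on `B_q`. The
holomorphic functions on `U` form a Baire space for locally uniform convergence, and those which
are bounded on a given `B_q` form a meagre subspace. Hence a single holomorphic `f` is unbounded on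
`B_q` for all `q` in a countable dense subset of `U`.

Such an `f` does not extend: if `g` on `V` continued it, then `f = g` on a component `Ω` of `U ∩ V`
having a closure point `b ∈ V \ U`. For `q ∈ Ω` close to `b` the ball `B_q` lies in `Ω` and near
`b`, where `g` is bounded.
-/

section HolomorphicFunctions

variable {E G : Type*} [NormedAddCommGroup E] [NormedSpace ℂ E] [NormedAddCommGroup G]
  [NormedSpace ℂ G]

theorem norm_fderiv_le_of_forall_mem_ball_norm_le {f : E → G} {x : E} {r C : ℝ} (hr : 0 < r)
    (hf : DifferentiableOn ℂ f (ball x r)) (hC : ∀ z ∈ ball x r, ‖f z‖ ≤ C) :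
    ‖fderiv ℂ f x‖ ≤ 2 * C / r := by
  refine Complex.norm_fderiv_le_div_of_mapsTo_ball hf (fun z hz => ?_) hr
  rw [mem_closedBall, dist_eq_norm]
  linarith [norm_sub_le (f z) (f x), hC z hz, hC x (mem_ball_self hr)]

theorem uniformCauchySeqOn_fderiv_of_thickening {ι : Type*} {l : Filter ι} {f : ι → E → G}
    {s : Set E} {δ : ℝ} (hδ : 0 < δ) (hf : ∀ n, DifferentiableOn ℂ (f n) (thickening δ s))
    (hcauchy : UniformCauchySeqOn f l (thickening δ s)) :
    UniformCauchySeqOn (fun n => fderiv ℂ (f n)) l s := by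
  intro u hu
  obtain ⟨ε, hε, hεu⟩ := mem_uniformity_dist.1 hu
  filter_upwards [hcauchy _ (dist_mem_uniformity (show 0 < δ * ε / 4 by positivity))]
    with mn hmn x hx
  have hball : ball x δ ⊆ thickening δ s := ball_subset_thickening hx δ
  have hdiff : ∀ n, DifferentiableAt ℂ (f n) x := fun n =>
    (hf n).differentiableAt (isOpen_thickening.mem_nhds (hball (mem_ball_self hδ)))
  have hbound : ‖fderiv ℂ (f mn.1 - f mn.2) x‖ ≤ 2 * (δ * ε / 4) / δ :=
    norm_fderiv_le_of_forall_mem_ball_norm_le hδ (((hf _).sub (hf _)).mono hball) fun z hz => by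
      rw [Pi.sub_apply, ← dist_eq_norm]
      exact (hmn z (hball hz)).le
  apply hεu
  calc dist (fderiv ℂ (f mn.1) x) (fderiv ℂ (f mn.2) x)
      = ‖fderiv ℂ (f mn.1 - f mn.2) x‖ := by
        rw [dist_eq_norm, fderiv_sub (hdiff _) (hdiff _)]
    _ ≤ 2 * (δ * ε / 4) / δ := hbound
    _ = ε / 2 := by field_simp; norm_num
    _ < ε := half_lt_self hε

theorem differentiableOn_of_tendstoLocallyUniformlyOn [ProperSpace E] [CompleteSpace G]
    {ι : Type*} {l : Filter ι} [l.NeBot] {f : ι → E → G} {g : E → G} {U : Set E} (hU : IsOpen U)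
    (hf : ∀ n, DifferentiableOn ℂ (f n) U) (hfg : TendstoLocallyUniformlyOn f g l U) :
    DifferentiableOn ℂ g U := by
  intro x hx
  obtain ⟨ε, hε, hεU⟩ := nhds_basis_closedBall.mem_iff.1 (hU.mem_nhds hx)
  have hεfg : TendstoUniformlyOn f g l (ball x ε) :=
    ((tendstoLocallyUniformlyOn_iff_forall_isCompact hU).1 hfg _ hεU
      (isCompact_closedBall x ε)).mono ball_subset_closedBall
  replace hεU : ball x ε ⊆ U := ball_subset_closedBall.trans hεU
  have hsub : thickening (ε / 2) (ball x (ε / 2)) ⊆ ball x ε := by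
    simpa only [add_halves] using Metric.thickening_ball x (ε / 2) (ε / 2)
  have hcauchy : UniformCauchySeqOn (fun n => fderiv ℂ (f n)) l (ball x (ε / 2)) :=
    uniformCauchySeqOn_fderiv_of_thickening (half_pos hε)
      (fun n => (hf n).mono (hsub.trans hεU)) (hεfg.uniformCauchySeqOn.mono hsub)
  have hlim : ∀ y ∈ ball x (ε / 2), ∃ L, Tendsto (fun n => fderiv ℂ (f n) y) l (𝓝 L) :=
    fun y hy => cauchy_map_iff_exists_tendsto.1 (hcauchy.cauchy_map hy)
  choose! g' hg' using hlim
  have hball : ball x (ε / 2) ⊆ ball x ε := ball_subset_ball (half_le_self hε.le)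
  exact (hasFDerivAt_of_tendstoUniformlyOn isOpen_ball
    (hcauchy.tendstoUniformlyOn_of_tendsto hg')
    (fun n y hy => ((hf n).differentiableAt (hU.mem_nhds (hεU (hball hy)))).hasFDerivAt)
    (fun y hy => hεfg.tendsto_at (hball hy))
    (mem_ball_self (half_pos hε))).differentiableAt.differentiableWithinAt

theorem eqOn_of_convex_of_eventuallyEq [CompleteSpace G] {f g : E → G} {s : Set E}
    (hs : IsOpen s) (hconv : Convex ℝ s) (hf : DifferentiableOn ℂ f s)
    (hg : DifferentiableOn ℂ g s) {y : E} (hy : y ∈ s) (hfg : f =ᶠ[𝓝 y] g) : EqOn f g s := by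
  intro z hz
  let line : ℂ → E := fun t => y + t • (z - y)
  have hline : Differentiable ℂ line := by fun_prop
  have hopen : IsOpen (line ⁻¹' s) := hs.preimage hline.continuous
  have hpre : IsPreconnected (line ⁻¹' s) :=
    ((hconv.translate_preimage_right y).linear_preimage
      ((LinearMap.toSpanSingleton ℂ E (z - y)).restrictScalars ℝ)).isPreconnected
  have hline_zero : line 0 = y := by simp only [line, zero_smul, add_zero]
  have hline_one : line 1 = z := by simp only [line, one_smul, add_sub_cancel]
  have heq : f ∘ line =ᶠ[𝓝 0] g ∘ line :=
    hfg.comp_tendsto (hline_zero ▸ hline.continuous.tendsto 0)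
  have hcomp : EqOn (f ∘ line) (g ∘ line) (line ⁻¹' s) :=
    ((hf.comp hline.differentiableOn fun _ => id).analyticOnNhd hopen)
      |>.eqOn_of_preconnected_of_eventuallyEq
        ((hg.comp hline.differentiableOn fun _ => id).analyticOnNhd hopen)
        hpre (mem_preimage.2 (hline_zero.symm ▸ hy)) heq
  exact hline_one ▸ hcomp (mem_preimage.2 (hline_one.symm ▸ hz))

theorem eqOn_of_isPreconnected_of_eventuallyEq [CompleteSpace G] {f g : E → G} {s : Set E}
    (hs : IsOpen s) (hconn : IsPreconnected s) (hf : DifferentiableOn ℂ f s)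
    (hg : DifferentiableOn ℂ g s) {y : E} (hy : y ∈ s) (hfg : f =ᶠ[𝓝 y] g) : EqOn f g s := by
  suffices hsub : s ⊆ {x | f =ᶠ[𝓝 x] g} from fun x hx => (hsub hx).eq_of_nhds
  refine hconn.subset_of_closure_inter_subset isOpen_setOfPred_eventually_nhds ⟨y, hy, hfg⟩ ?_
  rintro x ⟨hx, hxs⟩
  obtain ⟨r, hr, hrs⟩ := Metric.isOpen_iff.1 hs x hxs
  obtain ⟨w, hw, hfgw⟩ := mem_closure_iff.1 hx _ isOpen_ball (mem_ball_self hr)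
  exact (eqOn_of_convex_of_eventuallyEq isOpen_ball (convex_ball x r) (hf.mono hrs) (hg.mono hrs)
    hw hfgw).eventuallyEq_of_mem (ball_mem_nhds x hr)

variable (G) in
/-- The space `𝒪(U, G)` of holomorphic maps `U → G`, as a subspace of `C(U, G)` so that it carries
the topology of locally uniform convergence. An element is a continuous map on the subtype `U`;
holomorphy is expressed through an extension to `E` by arbitrary values. -/
def holomorphicMaps (U : Set E) : Submodule ℂ C(U, G) where
  carrier := {φ | ∃ f : E → G, DifferentiableOn ℂ f U ∧ U.domRestrict f = φ}
  zero_mem' := ⟨0, differentiableOn_const 0, rfl⟩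
  add_mem' := by
    rintro φ ψ ⟨f, hf, hfφ⟩ ⟨g, hg, hgψ⟩
    exact ⟨f + g, hf.add hg, by rw [ContinuousMap.coe_add, ← hfφ, ← hgψ]; rfl⟩
  smul_mem' := by
    rintro c φ ⟨f, hf, hfφ⟩
    exact ⟨c • f, hf.const_smul c, by rw [ContinuousMap.coe_smul, ← hfφ]; rfl⟩

theorem isClosed_holomorphicMaps [ProperSpace E] [CompleteSpace G] {U : Set E}
    (hU : IsOpen U) : IsClosed (holomorphicMaps G U : Set C(U, G)) := by
  have := hU.locallyCompactSpace
  refine isClosed_of_closure_subset fun φ hφ => ?_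
  choose f hf hfψ using fun ψ : (holomorphicMaps G U : Set C(U, G)) => ψ.2
  let l : Filter (holomorphicMaps G U : Set C(U, G)) := comap (↑) (𝓝 φ)
  have : l.NeBot := mem_closure_iff_comap_neBot.1 hφ
  let g : E → G := Function.extend (↑) φ 0
  have hg : ∀ z : U, g z = φ z := Subtype.val_injective.extend_apply φ 0
  have hlim : TendstoLocallyUniformlyOn f g l U := by
    rw [tendstoLocallyUniformlyOn_iff_tendstoLocallyUniformly_comp_coe]
    convert ContinuousMap.tendsto_iff_tendstoLocallyUniformly.1
      (tendsto_comap : Tendsto (↑) l (𝓝 φ)) using 1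
    · exact funext hfψ
    · exact funext hg
  exact ⟨g, differentiableOn_of_tendstoLocallyUniformlyOn hU hf hlim, funext hg⟩

theorem baireSpace_holomorphicMaps [ProperSpace E] [CompleteSpace G] {U : Set E}
    (hU : IsOpen U) : BaireSpace (holomorphicMaps G U) := by
  have := hU.locallyCompactSpace
  have : CompleteSpace (holomorphicMaps G U) :=
    (isClosed_holomorphicMaps hU).completeSpace_coe
  have : (uniformity (holomorphicMaps G U)).IsCountablyGenerated :=
    inferInstanceAs (comap _ (uniformity C(U, G))).IsCountablyGenerated
  infer_instance

end HolomorphicFunctions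

section Condensation

variable {𝕜 X G : Type*} [NontriviallyNormedField 𝕜] [AddCommGroup X] [Module 𝕜 X]
  [TopologicalSpace X] [ContinuousAdd X] [ContinuousSMul 𝕜 X] [NormedAddCommGroup G]
  [NormedSpace 𝕜 G]

theorem isMeagre_setOf_isBounded_range {κ : Type*} (T : κ → X →L[𝕜] G)
    (hT : ∃ x, ¬ Bornology.IsBounded (range fun k => T k x)) :
    IsMeagre {x | Bornology.IsBounded (range fun k => T k x)} := by
  obtain ⟨v, hv⟩ := hT
  let A : ℕ → Set X := fun N => {x | ∀ k, ‖T k x‖ ≤ N}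
  have hclosed : ∀ N, IsClosed (A N) := fun N => by
    simp only [A, ofPred_forall]
    exact isClosed_iInter fun k => isClosed_le (T k).continuous.norm continuous_const
  have hempty : ∀ N, interior (A N) = ∅ := fun N => by
    refine eq_empty_of_forall_notMem fun x hx => hv ?_
    have htendsto : Tendsto (fun c : 𝕜 => x + c • v) (𝓝[≠] 0) (𝓝 x) := by
      have hcont : Continuous fun c : 𝕜 => x + c • v := by fun_prop
      simpa using (hcont.tendsto 0).mono_left nhdsWithin_le_nhds
    obtain ⟨c, hc, hc0⟩ :=
      ((htendsto.eventually_mem (mem_interior_iff_mem_nhds.1 hx)).and self_mem_nhdsWithin).exists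
    refine isBounded_iff_forall_norm_le.2 ⟨2 * N / ‖c‖, forall_mem_range.2 fun k => ?_⟩
    rw [le_div_iff₀' (norm_pos_iff.2 hc0)]
    calc ‖c‖ * ‖T k v‖ = ‖T k (x + c • v) - T k x‖ := by
          rw [map_add, map_smul, add_sub_cancel_left, norm_smul]
      _ ≤ ‖T k (x + c • v)‖ + ‖T k x‖ := norm_sub_le _ _
      _ ≤ N + N := add_le_add (hc k) (interior_subset hx k)
      _ = 2 * N := (two_mul _).symm
  have hmeagre : IsMeagre (⋃ N, A N) := isMeagre_iUnion fun N =>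
    ((hclosed N).isNowhereDense_iff.2 (hempty N)).isMeagre
  refine hmeagre.mono fun x hx => ?_
  obtain ⟨C, hC⟩ := isBounded_iff_forall_norm_le.1 hx
  obtain ⟨N, hN⟩ := exists_nat_ge C
  exact mem_iUnion.2 ⟨N, fun k => (hC _ (mem_range_self k)).trans hN⟩

theorem exists_forall_not_isBounded_range [BaireSpace X] {ι : Type*} [Countable ι]
    {κ : ι → Type*} (T : ∀ i, κ i → X →L[𝕜] G)
    (hT : ∀ i, ∃ x, ¬ Bornology.IsBounded (range fun k => T i k x)) :
    ∃ x, ∀ i, ¬ Bornology.IsBounded (range fun k => T i k x) := by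
  have hmeagre := isMeagre_iUnion fun i => isMeagre_setOf_isBounded_range (T i) (hT i)
  obtain ⟨x, hx⟩ := (dense_of_mem_residual hmeagre).nonempty
  exact ⟨x, fun i hi => hx (mem_iUnion.2 ⟨i, hi⟩)⟩

end Condensation

section Continuation

theorem not_isBounded_range_of_tendsto_norm_atTop {ι G : Type*} [SeminormedAddGroup G]
    {l : Filter ι} [l.NeBot] {u : ι → G} (hu : Tendsto (fun j => ‖u j‖) l atTop) :
    ¬ Bornology.IsBounded (range u) := fun hb => by
  obtain ⟨C, hC⟩ := hb.exists_norm_le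
  exact not_bddAbove_of_tendsto_atTop hu ⟨C, forall_mem_range.2 fun j => hC _ (mem_range_self j)⟩

theorem exists_mem_diff_inter_closure_connectedComponentIn {X : Type*} [TopologicalSpace X]
    [LocallyConnectedSpace X] {U V : Set X} (hU : IsOpen U) (hV : IsOpen V)
    (hVc : IsPreconnected V) (hVU : ¬ V ⊆ U) {w : X} (hw : w ∈ U ∩ V) :
    ∃ b ∈ V \ U, b ∈ closure (connectedComponentIn (U ∩ V) w) := by
  by_contra! hnot
  refine hVU fun a ha => (connectedComponentIn_subset (U ∩ V) w ?_).1
  refine hVc.subset_of_closure_inter_subset (hU.inter hV).connectedComponentIn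
    ⟨w, hw.2, mem_connectedComponentIn hw⟩ ?_ ha
  rintro x ⟨hx, hxV⟩
  have hxU : x ∈ U := by_contra fun hxU => hnot x ⟨hxV, hxU⟩ hx
  have hmem : x ∈ connectedComponentIn (U ∩ V) x := mem_connectedComponentIn ⟨hxU, hxV⟩
  obtain ⟨y, hyx, hyw⟩ := mem_closure_iff.1 hx _ (hU.inter hV).connectedComponentIn hmem
  rwa [connectedComponentIn_eq hyw, ← connectedComponentIn_eq hyx]

variable {E G : Type*} [NormedAddCommGroup E] [NormedSpace ℂ E] [NormedAddCommGroup G]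
  [NormedSpace ℂ G]

/-- Holomorphic extendability of `f : E → G`, holomorphic on `U`, to a point `a`, in the sense of
`ExtendsHolomorphicallyTo` but for maps between complex normed spaces. -/
def HasHolomorphicExtensionAt (U : Set E) (f : E → G) (a : E) : Prop :=
  ∃ V : Set E, IsOpen V ∧ IsConnected V ∧ a ∈ V ∧
    ∃ g : E → G, DifferentiableOn ℂ g V ∧
      ∃ W : Set E, IsOpen W ∧ W.Nonempty ∧ W ⊆ U ∩ V ∧ EqOn f g W

variable [CompleteSpace G] {U : Set E}

theorem exists_differentiableOn_forall_not_isBounded_image [ProperSpace E] (hU : IsOpen U)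
    {ι : Type*} [Countable ι] {S : ι → Set E} (hS : ∀ i, S i ⊆ U)
    (h : ∀ i, ∃ f : E → G, DifferentiableOn ℂ f U ∧ ¬ Bornology.IsBounded (f '' S i)) :
    ∃ f : E → G, DifferentiableOn ℂ f U ∧ ∀ i, ¬ Bornology.IsBounded (f '' S i) := by
  have := baireSpace_holomorphicMaps (G := G) hU
  let eval : ∀ i, S i → holomorphicMaps G U →L[ℂ] G := fun i z =>
    (ContinuousMap.evalCLM ℂ (⟨z, hS i z.2⟩ : U)).comp (holomorphicMaps G U).subtypeL
  have heval : ∀ i (φ : holomorphicMaps G U) (f : E → G), U.domRestrict f = φ.1 →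
      range (fun z => eval i z φ) = f '' S i := fun i φ f hfφ => by
    rw [image_eq_range]
    exact congrArg range (funext fun z => (congrFun hfφ ⟨z, hS i z.2⟩).symm)
  obtain ⟨φ, hφ⟩ := exists_forall_not_isBounded_range eval fun i => by
    obtain ⟨f, hf, hfS⟩ := h i
    let φ : holomorphicMaps G U := ⟨⟨U.domRestrict f, hf.continuousOn.domRestrict⟩, f, hf, rfl⟩
    exact ⟨φ, heval i φ f rfl ▸ hfS⟩
  obtain ⟨f, hf, hfφ⟩ := φ.2
  exact ⟨f, hf, fun i => heval i φ f hfφ ▸ hφ i⟩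

theorem not_hasHolomorphicExtensionAt_of_forall_not_isBounded_image_ball (hU : IsOpen U) {Q : Set E}
    (hQ : Dense Q) {f : E → G} (hf : DifferentiableOn ℂ f U)
    (hunb : ∀ q ∈ Q ∩ U, ¬ Bornology.IsBounded (f '' ball q (infDist q Uᶜ))) {a : E}
    (ha : a ∉ U) :
    ¬ HasHolomorphicExtensionAt U f a := by
  rintro ⟨V, hVo, hVc, haV, g, hg, W, hWo, ⟨w, hw⟩, hWUV, hfgW⟩
  have hUV : IsOpen (U ∩ V) := hU.inter hVo
  let Ω : Set E := connectedComponentIn (U ∩ V) w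
  have hΩ : Ω ⊆ U ∩ V := connectedComponentIn_subset (U ∩ V) w
  have hfg : EqOn f g Ω :=
    eqOn_of_isPreconnected_of_eventuallyEq hUV.connectedComponentIn
      isPreconnected_connectedComponentIn (hf.mono (hΩ.trans inter_subset_left))
      (hg.mono (hΩ.trans inter_subset_right)) (mem_connectedComponentIn (hWUV hw))
      (hfgW.eventuallyEq_of_mem (hWo.mem_nhds hw))
  obtain ⟨b, ⟨hbV, hbU⟩, hbΩ⟩ := exists_mem_diff_inter_closure_connectedComponentIn hU hVo
    hVc.isPreconnected (fun hVU => ha (hVU haV)) (hWUV hw)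
  obtain ⟨ε, hε, hεV, hεg⟩ : ∃ ε > 0, ball b ε ⊆ V ∧ Bornology.IsBounded (g '' ball b ε) := by
    obtain ⟨s, hs, hgs⟩ := exists_isBounded_image_of_tendsto
      (hg.continuousOn.continuousAt (hVo.mem_nhds hbV))
    obtain ⟨ε, hε, hεs⟩ := Metric.mem_nhds_iff.1 (inter_mem (hVo.mem_nhds hbV) hs)
    have hεV : ball b ε ⊆ V := hεs.trans inter_subset_left
    exact ⟨ε, hε, hεV, hgs.subset (image_mono (hεs.trans inter_subset_right))⟩
  obtain ⟨q, ⟨hqΩ, hqb⟩, hqQ⟩ := hQ.inter_open_nonempty (Ω ∩ ball b (ε / 2))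
    (hUV.connectedComponentIn.inter isOpen_ball)
    (inter_comm Ω _ ▸ mem_closure_iff.1 hbΩ _ isOpen_ball (mem_ball_self (half_pos hε)))
  have hqU : q ∈ U := (hΩ hqΩ).1
  have hball : ball q (infDist q Uᶜ) ⊆ ball b ε := ball_subset_ball' <| by
    linarith [infDist_le_dist_of_mem (x := q) (mem_compl hbU), mem_ball.1 hqb]
  have hballΩ : ball q (infDist q Uᶜ) ⊆ Ω := by
    rw [show Ω = connectedComponentIn (U ∩ V) q from connectedComponentIn_eq hqΩ]
    have hpos : 0 < infDist q Uᶜ := (hU.isClosed_compl.notMem_iff_infDist_pos ⟨a, ha⟩).1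
      (notMem_compl_iff.2 hqU)
    exact (convex_ball q _).isPreconnected.subset_connectedComponentIn (mem_ball_self hpos)
      (subset_inter ball_infDist_compl_subset (hball.trans hεV))
  refine hunb q ⟨hqQ, hqU⟩ (hεg.subset ?_)
  rw [(hfg.mono hballΩ).image_eq]
  exact image_mono hball

theorem exists_mem_frontier_inter_closure_ball_infDist_compl {F : Type*} [NormedAddCommGroup F]
    [NormedSpace ℝ F] [FiniteDimensional ℝ F] {s : Set F} (hs : IsOpen s) (hne : s ≠ univ)
    {x : F} (hx : x ∈ s) : ∃ y ∈ frontier s, y ∈ closure (ball x (infDist x sᶜ)) := by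
  obtain ⟨y, hy, hxy⟩ := exists_mem_frontier_infDist_compl_eq_dist hx hne
  have hpos : 0 < infDist x sᶜ :=
    (hs.isClosed_compl.notMem_iff_infDist_pos (nonempty_compl.2 hne)).1 (notMem_compl_iff.2 hx)
  refine ⟨y, hy, ?_⟩
  rw [closure_ball x hpos.ne', mem_closedBall']
  exact hxy.ge

theorem isDomainOfHolomorphy_of_boundary_blowup_general [FiniteDimensional ℂ E] (hU : IsOpen U)
    (h : ∀ a ∈ frontier U, ∀ z : ℕ → E, (∀ j, z j ∈ U) → Tendsto z atTop (𝓝 a) →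
      ∃ f : E → G, DifferentiableOn ℂ f U ∧ ¬ Bornology.IsBounded (range (f ∘ z))) :
    ∃ f : E → G, DifferentiableOn ℂ f U ∧ ∀ a ∈ Uᶜ, ¬ HasHolomorphicExtensionAt U f a := by
  rcases eq_or_ne U univ with rfl | hne
  · exact ⟨0, differentiableOn_const 0, fun a ha => absurd (mem_univ a) ha⟩
  have : ProperSpace E := FiniteDimensional.proper ℂ E
  obtain ⟨Q, hQc, hQ⟩ := TopologicalSpace.exists_countable_dense E
  have : Countable ↥(Q ∩ U) := (hQc.mono inter_subset_left).to_subtype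
  have hunb : ∀ q : ↥(Q ∩ U), ∃ f : E → G, DifferentiableOn ℂ f U ∧
      ¬ Bornology.IsBounded (f '' ball (q : E) (infDist (q : E) Uᶜ)) := by
    rintro ⟨q, -, hqU⟩
    obtain ⟨a, ha, haq⟩ := exists_mem_frontier_inter_closure_ball_infDist_compl hU hne hqU
    obtain ⟨z, hz, hza⟩ := mem_closure_iff_seq_limit.1 haq
    obtain ⟨f, hf, hfz⟩ := h a ha z (fun j => ball_infDist_compl_subset (hz j)) hza
    refine ⟨f, hf, fun hb => hfz (hb.subset ?_)⟩
    exact range_subset_iff.2 fun j => mem_image_of_mem f (hz j)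
  obtain ⟨f, hf, hfQ⟩ := exists_differentiableOn_forall_not_isBounded_image hU
    (fun _ => ball_infDist_compl_subset) hunb
  exact ⟨f, hf, fun a ha => not_hasHolomorphicExtensionAt_of_forall_not_isBounded_image_ball
    hU hQ hf (fun q hq => hfQ ⟨q, hq⟩) ha⟩

end Continuation

/-- If for every boundary point `a` of the domain `U` there is a holomorphic function on `U`
tending to `∞` at `a`, then `U` is a domain of holomorphy. -/
theorem isDomainOfHolomorphy_of_boundary_blowup {n : ℕ} (U : Set (Fin n → ℂ))
    (hUo : IsOpen U) (hUc : IsConnected U)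
    (h : ∀ a ∈ frontier U, ∃ f : (Fin n → ℂ) → ℂ, DifferentiableOn ℂ f U ∧
      ∀ z : ℕ → (Fin n → ℂ), (∀ j, z j ∈ U) → Tendsto z atTop (𝓝 a) →
        Tendsto (fun j => ‖f (z j)‖) atTop atTop) :
    IsDomainOfHolomorphy U :=
  ⟨hUo, hUc, isDomainOfHolomorphy_of_boundary_blowup_general hUo fun a ha z hz hza =>
    let ⟨f, hf, hfa⟩ := h a ha
    ⟨f, hf, not_isBounded_range_of_tendsto_norm_atTop (hfa z hz hza)⟩⟩
end

section
/- (Cartan–Thullen) If U ⊆ ℂⁿ is a domain of holomorphy then U is holomorphically convex. -/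
open Set Metric Filter Topology

/-- The holomorphically convex hull of `K` in `U`:
`K̂ = {z ∈ U : ‖f z‖ ≤ sup_{w ∈ K} ‖f w‖ for every f holomorphic on U}`. -/
def holConvexHull {n : ℕ} (U K : Set (Fin n → ℂ)) : Set (Fin n → ℂ) :=
  {z ∈ U | ∀ f : (Fin n → ℂ) → ℂ, DifferentiableOn ℂ f U → ‖f z‖ ≤ ⨆ w : K, ‖f w‖}

/-- `U` is holomorphically convex: the holomorphically convex hull of every compact subset of `U`
is compact. -/
def HolomorphicallyConvex {n : ℕ} (U : Set (Fin n → ℂ)) : Prop :=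
  ∀ K : Set (Fin n → ℂ), K ⊆ U → IsCompact K → IsCompact (holConvexHull U K)

/-!
For `y` fixed, the degree-`k` homogeneous Taylor term of a function `f` holomorphic on `U` is a
holomorphic function of the centre `z ∈ U`. If `‖f‖ ≤ M` on the closed `r`-neighbourhood of `K`,
Cauchy's estimate on complex lines bounds this term by `M (‖y‖ / r) ^ k` at every `z ∈ K`, and
hence, by definition of the hull, at every `z ∈ K̂`. So the Taylor series of `f` at a point of
`K̂` converges to a holomorphic extension of `f` on the ball of radius `r`. If every point
outside `U` obstructs the extension of some `f`, these balls lie in `U`, so that `K̂`, which is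
bounded and relatively closed in `U`, stays away from the boundary of `U`.

The terms are holomorphic in the centre and the increment jointly because directional
derivatives of holomorphic functions are holomorphic, being locally uniform limits of difference
quotients.
-/

theorem exists_mapsTo_ball_of_continuousAt {X Y : Type*} [PseudoMetricSpace X] [PseudoMetricSpace Y]
    {f : X → Y} {x : X} {U : Set X} {M : ℝ} (hf : ContinuousAt f x) (hU : U ∈ 𝓝 x) (hM : 0 < M) :
    ∃ R > 0, ∀ y ∈ ball x R, ball y R ⊆ U ∧ MapsTo f (ball y R) (closedBall (f y) M) := by
  obtain ⟨δ, hδ, hδU⟩ := Metric.mem_nhds_iff.mp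
    (inter_mem hU (hf.preimage_mem_nhds (ball_mem_nhds (f x) (half_pos hM))))
  refine ⟨δ / 2, half_pos hδ, fun y hy => ?_⟩
  have hball : ball y (δ / 2) ⊆ ball x δ := ball_subset_ball' (by linarith [mem_ball.mp hy])
  refine ⟨fun w hw => (hδU (hball hw)).1, fun w hw => ?_⟩
  have hfw : dist (f w) (f x) < M / 2 := (hδU (hball hw)).2
  have hfy : dist (f y) (f x) < M / 2 := (hδU (hball (mem_ball_self (half_pos hδ)))).2
  exact mem_closedBall.mpr (by linarith [dist_triangle_right (f w) (f y) (f x)])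

section UniformLimits

variable {E F : Type*} [NormedAddCommGroup E] [NormedSpace ℂ E] [NormedAddCommGroup F]
  [NormedSpace ℂ F] {f : E → F} {x v : E} {R M : ℝ}

theorem norm_fderiv_le_of_forall_mem_ball (hR : 0 < R) (hf : DifferentiableOn ℂ f (ball x R))
    (hM : ∀ y ∈ ball x R, ‖f y‖ ≤ M) : ‖fderiv ℂ f x‖ ≤ 2 * M / R := by
  refine Complex.norm_fderiv_le_div_of_mapsTo_ball hf (fun y hy => ?_) hR
  rw [mem_closedBall_iff_norm]
  linarith [norm_sub_le (f y) (f x), hM y hy, hM x (mem_ball_self hR)]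

-- The remainder vanishes to second order at `v = 0`, so the Schwarz lemma bounds it quadratically.
theorem norm_sub_sub_fderiv_le_of_mapsTo_ball (hf : DifferentiableOn ℂ f (ball x R))
    (hM : MapsTo f (ball x R) (closedBall (f x) M)) (hv : ‖v‖ < R) :
    ‖f (x + v) - f x - fderiv ℂ f x v‖ ≤ 2 * M * (‖v‖ / R) ^ 2 := by
  have hR : 0 < R := (norm_nonneg v).trans_lt hv
  have hderiv : HasFDerivAt f (fderiv ℂ f x) x :=
    (hf.differentiableAt (ball_mem_nhds x hR)).hasFDerivAt
  set g : E → F := fun w => f w - f x - fderiv ℂ f x (w - x) with hg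
  have hgx : g x = 0 := by simp [hg]
  have hg_diff : DifferentiableOn ℂ g (ball x R) := by fun_prop
  have hg_maps : MapsTo g (ball x R) (closedBall (g x) (2 * M)) := fun w hw => by
    have hfw : ‖f w - f x‖ ≤ M := mem_closedBall_iff_norm.mp (hM hw)
    have hlin : ‖fderiv ℂ f x (w - x)‖ ≤ M := calc
      _ ≤ ‖fderiv ℂ f x‖ * ‖w - x‖ := (fderiv ℂ f x).le_opNorm _
      _ ≤ M / R * R := by
        gcongr
        · exact div_nonneg ((norm_nonneg _).trans hfw) hR.le
        · exact Complex.norm_fderiv_le_div_of_mapsTo_ball hf hM hR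
        · exact (mem_ball_iff_norm.mp hw).le
      _ = M := div_mul_cancel₀ M hR.ne'
    rw [hgx, mem_closedBall_zero_iff]
    linarith [norm_sub_le (f w - f x) (fderiv ℂ f x (w - x))]
  have hg_littleO : (fun w => g w - g x) =o[𝓝 x] fun w => ‖w - x‖ ^ 1 := by
    simpa only [hgx, sub_zero, pow_one] using hderiv.isLittleO.norm_right
  have hxv : x + v ∈ ball x R := by simpa [mem_ball_iff_norm] using hv
  simpa [hgx, hg, dist_eq_norm] using
    Complex.dist_le_mul_div_pow_of_mapsTo_ball_of_isLittleO hg_diff hg_maps hg_littleO hxv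

theorem dist_fderiv_apply_inv_smul_sub_le {h : ℂ} (hf : DifferentiableOn ℂ f (ball x R))
    (hM : MapsTo f (ball x R) (closedBall (f x) M)) (hh0 : h ≠ 0) (hh : ‖h • v‖ < R) :
    dist (fderiv ℂ f x v) (h⁻¹ • (f (x + h • v) - f x)) ≤ ‖h‖ * (2 * M * (‖v‖ / R) ^ 2) := by
  have hrem := norm_sub_sub_fderiv_le_of_mapsTo_ball hf hM hh
  calc dist (fderiv ℂ f x v) (h⁻¹ • (f (x + h • v) - f x))
      = ‖h‖⁻¹ * ‖f (x + h • v) - f x - fderiv ℂ f x (h • v)‖ := by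
        rw [dist_comm, dist_eq_norm, ← norm_inv, ← norm_smul, smul_sub _ (f _ - f x), map_smul,
          inv_smul_smul₀ hh0]
    _ ≤ ‖h‖⁻¹ * (2 * M * (‖h • v‖ / R) ^ 2) := by gcongr
    _ = ‖h‖ * (2 * M * (‖v‖ / R) ^ 2) := by
        have hh_norm : ‖h‖ ≠ 0 := norm_ne_zero_iff.mpr hh0
        rw [norm_smul]
        field_simp

variable {ι : Type*} {φ : Filter ι} {G : ι → E → F} {U V : Set E}

theorem eventually_norm_smul_lt (v : E) (hR : 0 < R) : ∀ᶠ h : ℂ in 𝓝[≠] 0, ‖h • v‖ < R :=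
  ((by fun_prop : Continuous fun h : ℂ => ‖h • v‖).tendsto' 0 0 (by simp)).mono_left
    nhdsWithin_le_nhds |>.eventually_lt_const hR

theorem tendstoUniformlyOn_inv_smul_sub (v : E) (hR : 0 < R)
    (hf : ∀ x ∈ V, DifferentiableOn ℂ f (ball x R))
    (hM : ∀ x ∈ V, MapsTo f (ball x R) (closedBall (f x) M)) :
    TendstoUniformlyOn (fun (h : ℂ) x => h⁻¹ • (f (x + h • v) - f x))
      (fun x => fderiv ℂ f x v) (𝓝[≠] 0) V := by
  rw [Metric.tendstoUniformlyOn_iff]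
  intro ε hε
  have herror : Tendsto (fun h : ℂ => ‖h‖ * (2 * M * (‖v‖ / R) ^ 2)) (𝓝[≠] 0) (𝓝 0) :=
    ((by fun_prop : Continuous fun h : ℂ => ‖h‖ * (2 * M * (‖v‖ / R) ^ 2)).tendsto' 0 0
      (by simp)).mono_left nhdsWithin_le_nhds
  filter_upwards [eventually_norm_smul_lt v hR, herror.eventually_lt_const hε,
    self_mem_nhdsWithin] with h hh hhε hh0 x hx
  exact (dist_fderiv_apply_inv_smul_sub_le (hf x hx) (hM x hx) hh0 hh).trans_lt hhε

theorem uniformCauchySeqOn_fderiv (hR : 0 < R) (hVU : ∀ x ∈ V, ball x R ⊆ U)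
    (hG : ∀ᶠ i in φ, DifferentiableOn ℂ (G i) U) (hGc : UniformCauchySeqOn G φ U) :
    UniformCauchySeqOn (fun i => fderiv ℂ (G i)) φ V := by
  intro u hu
  obtain ⟨ε, hε, hεu⟩ := Metric.mem_uniformity_dist.mp hu
  have hclose : ∀ᶠ p in φ ×ˢ φ, ∀ x ∈ U, dist (G p.1 x) (G p.2 x) < ε * R / 4 :=
    hGc _ (Metric.dist_mem_uniformity (by positivity))
  filter_upwards [hclose, hG.prod_mk hG] with p hp hGp x hx
  have hdiff : ∀ i, DifferentiableOn ℂ (G i) U → DifferentiableAt ℂ (G i) x := fun _ hi =>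
    (hi.mono (hVU x hx)).differentiableAt (ball_mem_nhds x hR)
  apply hεu
  calc dist (fderiv ℂ (G p.1) x) (fderiv ℂ (G p.2) x)
      = ‖fderiv ℂ (G p.1 - G p.2) x‖ := by
        rw [dist_eq_norm, fderiv_sub (hdiff _ hGp.1) (hdiff _ hGp.2)]
    _ ≤ 2 * (ε * R / 4) / R :=
        norm_fderiv_le_of_forall_mem_ball hR ((hGp.1.sub hGp.2).mono (hVU x hx)) fun y hy => by
          simpa only [Pi.sub_apply, dist_eq_norm] using (hp y (hVU x hx hy)).le
    _ = ε / 2 := by field_simp; norm_num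
    _ < ε := half_lt_self hε

variable [CompleteSpace F]

/-- **Weierstrass' theorem**: by Cauchy's estimate, the derivatives converge uniformly on smaller
balls. -/
theorem differentiableOn_of_tendstoUniformlyOn [φ.NeBot] (hU : IsOpen U)
    (hG : ∀ᶠ i in φ, DifferentiableOn ℂ (G i) U) (hGf : TendstoUniformlyOn G f φ U) :
    DifferentiableOn ℂ f U := by
  intro x₀ hx₀
  obtain ⟨δ, hδ, hδU⟩ := Metric.isOpen_iff.mp hU x₀ hx₀
  have hball : ∀ x ∈ ball x₀ (δ / 2), ball x (δ / 2) ⊆ U := fun x hx =>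
    (ball_subset_ball' (by linarith [mem_ball.mp hx])).trans hδU
  have hcauchy := uniformCauchySeqOn_fderiv (half_pos hδ) hball hG hGf.uniformCauchySeqOn
  have hlim : ∀ x ∈ ball x₀ (δ / 2), ∃ L, Tendsto (fun i => fderiv ℂ (G i) x) φ (𝓝 L) :=
    fun x hx => cauchy_map_iff_exists_tendsto.mp (hcauchy.cauchy_map hx)
  choose! f' hf' using hlim
  have hderiv : HasFDerivAt f (f' x₀) x₀ := by
    refine hasFDerivAt_of_tendstoUniformlyOnFilter (f := G)
      ((hcauchy.tendstoUniformlyOn_of_tendsto hf').tendstoUniformlyOnFilter.mono_right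
        (le_principal_iff.mpr (ball_mem_nhds x₀ (half_pos hδ)))) ?_ ?_
    · filter_upwards [hG.prod_mk (hU.mem_nhds hx₀)] with p hp
      exact (hp.1.differentiableAt (hU.eventually_mem hp.2)).hasFDerivAt
    · filter_upwards [hU.mem_nhds hx₀] with x hx using hGf.tendsto_at hx
  exact hderiv.differentiableAt.differentiableWithinAt

theorem differentiableOn_tsum_of_norm_le {u : ι → ℝ} (hU : IsOpen U) (hu : Summable u)
    (hG : ∀ i, DifferentiableOn ℂ (G i) U) (hGu : ∀ i, ∀ x ∈ U, ‖G i x‖ ≤ u i) :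
    DifferentiableOn ℂ (fun x => ∑' i, G i x) U :=
  differentiableOn_of_tendstoUniformlyOn hU
    (.of_forall fun _ => DifferentiableOn.fun_sum fun i _ => hG i) (tendstoUniformlyOn_tsum hu hGu)

theorem differentiableOn_fderiv_apply (hU : IsOpen U) (hf : DifferentiableOn ℂ f U) (v : E) :
    DifferentiableOn ℂ (fun x => fderiv ℂ f x v) U := by
  intro x₀ hx₀
  obtain ⟨R, hR, hball⟩ := exists_mapsTo_ball_of_continuousAt
    (hf.continuousOn.continuousAt (hU.mem_nhds hx₀)) (hU.mem_nhds hx₀) one_pos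
  have hquot_diff : ∀ᶠ h : ℂ in 𝓝[≠] 0,
      DifferentiableOn ℂ (fun x => h⁻¹ • (f (x + h • v) - f x)) (ball x₀ R) := by
    filter_upwards [eventually_norm_smul_lt v hR] with h hh
    have hshift : MapsTo (fun x => x + h • v) (ball x₀ R) U := fun x hx =>
      (hball x hx).1 (by simpa [mem_ball_iff_norm] using hh)
    have hsub : ball x₀ R ⊆ U := (hball x₀ (mem_ball_self hR)).1
    exact ((hf.comp (by fun_prop) hshift).sub (hf.mono hsub)).const_smul h⁻¹
  have hquot_lim := tendstoUniformlyOn_inv_smul_sub v hR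
    (fun x hx => hf.mono (hball x hx).1) fun x hx => (hball x hx).2
  exact (differentiableOn_of_tendstoUniformlyOn isOpen_ball hquot_diff hquot_lim).differentiableAt
    (ball_mem_nhds x₀ hR) |>.differentiableWithinAt

end UniformLimits

section TaylorTerms

variable {E F : Type*} [NormedAddCommGroup E] [NormedSpace ℂ E] [NormedAddCommGroup F]
  [NormedSpace ℂ F]

/-- The homogeneous part of degree `k` of the Taylor expansion of `f` at `z`, evaluated at the
increment `y`. It is read off the restriction of `f` to the complex line through `z` in the
direction `y`, so that one-variable Taylor theory applies to it. -/
noncomputable def homogeneousTaylorTerm (f : E → F) (k : ℕ) (z y : E) : F :=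
  (k.factorial : ℂ)⁻¹ • iteratedDeriv k (fun t : ℂ => f (z + t • y)) 0

variable {f : E → F} {U : Set E} {z y : E} {r M : ℝ}

theorem norm_homogeneousTaylorTerm_le [CompleteSpace F] (hr : 0 < r)
    (hf : DifferentiableOn ℂ f (closedBall z r)) (hM : ∀ w ∈ closedBall z r, ‖f w‖ ≤ M) (k : ℕ) :
    ‖homogeneousTaylorTerm f k z y‖ ≤ M * (‖y‖ / r) ^ k := by
  rcases eq_or_ne y 0 with rfl | hy
  · have hfz : ‖f z‖ ≤ M := hM z (mem_closedBall_self hr.le)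
    cases k <;> simp [homogeneousTaylorTerm, iteratedDeriv_const, hfz]
  have hy' : 0 < ‖y‖ := norm_pos_iff.mpr hy
  have hR : 0 < r / ‖y‖ := div_pos hr hy'
  have hline : MapsTo (fun t : ℂ => z + t • y) (closedBall 0 (r / ‖y‖)) (closedBall z r) :=
    fun t ht => by
      rw [mem_closedBall_zero_iff, le_div_iff₀ hy'] at ht
      simpa [mem_closedBall_iff_norm, norm_smul] using ht
  have hdiff : DiffContOnCl ℂ (fun t : ℂ => f (z + t • y)) (ball 0 (r / ‖y‖)) := by
    refine DifferentiableOn.diffContOnCl ?_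
    rw [closure_ball _ hR.ne']
    exact hf.comp (by fun_prop) hline
  have hcauchy := Complex.norm_iteratedDeriv_le_of_forall_mem_sphere_norm_le k hR hdiff
    fun t ht => hM _ (hline (sphere_subset_closedBall ht))
  calc ‖homogeneousTaylorTerm f k z y‖
      = (k.factorial : ℝ)⁻¹ * ‖iteratedDeriv k (fun t : ℂ => f (z + t • y)) 0‖ := by
        simp [homogeneousTaylorTerm, norm_smul]
    _ ≤ (k.factorial : ℝ)⁻¹ * (k.factorial * M / (r / ‖y‖) ^ k) := by gcongr
    _ = M * (‖y‖ / r) ^ k := by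
        rw [← inv_div r, inv_pow]
        field_simp

theorem hasSum_homogeneousTaylorTerm [CompleteSpace F] (hf : DifferentiableOn ℂ f (ball z r))
    (hy : ‖y‖ < r) : HasSum (fun k => homogeneousTaylorTerm f k z y) (f (z + y)) := by
  obtain ⟨q, hyq, hqr⟩ := exists_between hy
  have hq : 0 < q := (norm_nonneg y).trans_lt hyq
  have hline : MapsTo (fun t : ℂ => z + t • y) (ball 0 (r / q)) (ball z r) := fun t ht => by
    rw [mem_ball_zero_iff, lt_div_iff₀ hq] at ht
    rw [mem_ball_iff_norm, add_sub_cancel_left, norm_smul]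
    exact (by gcongr : ‖t‖ * ‖y‖ ≤ ‖t‖ * q).trans_lt ht
  have hone : (1 : ℂ) ∈ ball 0 (r / q) := by simpa using (one_lt_div hq).mpr hqr
  have hslice : DifferentiableOn ℂ (fun t : ℂ => f (z + t • y)) (ball 0 (r / q)) :=
    hf.comp (by fun_prop) hline
  simpa [homogeneousTaylorTerm] using Complex.hasSum_taylorSeries_on_ball hslice hone

theorem differentiableOn_iteratedDeriv_snd [CompleteSpace F] {g : E × ℂ → F} {Ω : Set (E × ℂ)}
    (hΩ : IsOpen Ω) (hg : DifferentiableOn ℂ g Ω) (k : ℕ) :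
    DifferentiableOn ℂ (fun p => iteratedDeriv k (fun t => g (p.1, t)) p.2) Ω := by
  induction k with
  | zero => simpa using hg
  | succ k ih =>
    refine (differentiableOn_fderiv_apply hΩ ih (0, 1)).congr fun p hp => ?_
    have hslice : HasDerivAt (fun t : ℂ => (p.1, t)) (0, 1) p.2 :=
      (hasDerivAt_const p.2 p.1).prodMk (hasDerivAt_id p.2)
    have hcomp := (ih.differentiableAt (hΩ.mem_nhds hp)).hasFDerivAt.comp_hasDerivAt p.2 hslice
    rw [iteratedDeriv_succ]
    exact hcomp.deriv

theorem differentiableOn_homogeneousTaylorTerm [CompleteSpace F] (hU : IsOpen U)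
    (hf : DifferentiableOn ℂ f U) (k : ℕ) :
    DifferentiableOn ℂ (fun p : E × E => homogeneousTaylorTerm f k p.1 p.2) (U ×ˢ univ) := by
  let line : (E × E) × ℂ → E := fun q => q.1.1 + q.2 • q.1.2
  have hline : Differentiable ℂ line := by fun_prop
  have hderiv := differentiableOn_iteratedDeriv_snd (hU.preimage hline.continuous)
    (hf.comp hline.differentiableOn (mapsTo_preimage line U)) k
  have hzero : MapsTo (fun p : E × E => (p, (0 : ℂ))) (U ×ˢ univ) (line ⁻¹' U) := fun p hp => by
    simpa [line] using hp.1
  exact (hderiv.comp (by fun_prop) hzero).const_smul (k.factorial : ℂ)⁻¹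

theorem differentiableOn_tsum_homogeneousTaylorTerm [CompleteSpace F] (hU : IsOpen U)
    (hf : DifferentiableOn ℂ f U) (hz : z ∈ U)
    (hM : ∀ k y, ‖homogeneousTaylorTerm f k z y‖ ≤ M * (‖y‖ / r) ^ k) :
    DifferentiableOn ℂ (fun y => ∑' k, homogeneousTaylorTerm f k z y) (ball 0 r) := by
  intro y hy
  have hM0 : 0 ≤ M := (norm_nonneg _).trans (by simpa using hM 0 0)
  obtain ⟨q, hyq, hqr⟩ := exists_between (mem_ball_zero_iff.mp hy)
  have hq : 0 < q := (norm_nonneg y).trans_lt hyq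
  have hr : 0 < r := hq.trans hqr
  have hsum : Summable fun k : ℕ => M * (q / r) ^ k :=
    (summable_geometric_of_lt_one (by positivity) ((div_lt_one hr).mpr hqr)).mul_left M
  have hterm : ∀ k, DifferentiableOn ℂ (fun y => homogeneousTaylorTerm f k z y) (ball 0 q) :=
    fun k => (differentiableOn_homogeneousTaylorTerm hU hf k).comp (f := fun y => (z, y))
      (by fun_prop) fun _ _ => ⟨hz, mem_univ _⟩
  refine (differentiableOn_tsum_of_norm_le isOpen_ball hsum hterm fun k w hw => ?_).differentiableAt
    (isOpen_ball.mem_nhds (mem_ball_zero_iff.mpr hyq)) |>.differentiableWithinAt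
  refine (hM k w).trans ?_
  gcongr
  exact (mem_ball_zero_iff.mp hw).le

end TaylorTerms

section Hull

variable {n : ℕ} {U K : Set (Fin n → ℂ)} {f : (Fin n → ℂ) → ℂ} {z a : Fin n → ℂ} {r M : ℝ}

theorem extendsHolomorphicallyTo_of_norm_homogeneousTaylorTerm_le (hU : IsOpen U)
    (hf : DifferentiableOn ℂ f U) (hz : z ∈ U)
    (hM : ∀ k y, ‖homogeneousTaylorTerm f k z y‖ ≤ M * (‖y‖ / r) ^ k) (ha : a ∈ ball z r) :
    ExtendsHolomorphicallyTo U f a := by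
  have hr : 0 < r := pos_of_mem_ball ha
  have hshift : MapsTo (fun x => x - z) (ball z r) (ball 0 r) := fun x hx => by
    rwa [mem_ball_zero_iff, ← mem_ball_iff_norm]
  obtain ⟨δ, hδ, hδU⟩ := Metric.isOpen_iff.mp hU z hz
  refine ⟨ball z r, isOpen_ball, (convex_ball z r).isConnected ⟨a, ha⟩, ha,
    fun x => ∑' k, homogeneousTaylorTerm f k z (x - z),
    (differentiableOn_tsum_homogeneousTaylorTerm hU hf hz hM).comp (by fun_prop) hshift,
    ball z δ ∩ ball z r, isOpen_ball.inter isOpen_ball,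
    ⟨z, mem_ball_self hδ, mem_ball_self hr⟩, inter_subset_inter_left _ hδU, fun x hx => ?_⟩
  have hsum := hasSum_homogeneousTaylorTerm (hf.mono hδU) (mem_ball_iff_norm.mp hx.1)
  simpa using hsum.tsum_eq.symm

theorem norm_le_of_mem_holConvexHull (hz : z ∈ holConvexHull U K) (hf : DifferentiableOn ℂ f U)
    (hM : 0 ≤ M) (hK : ∀ w ∈ K, ‖f w‖ ≤ M) : ‖f z‖ ≤ M :=
  (hz.2 f hf).trans (Real.iSup_le (fun w => hK w w.2) hM)

theorem norm_homogeneousTaylorTerm_le_of_mem_holConvexHull (hU : IsOpen U)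
    (hf : DifferentiableOn ℂ f U) (hr : 0 < r) (hrU : cthickening r K ⊆ U) (hM : 0 ≤ M)
    (hfM : ∀ w ∈ cthickening r K, ‖f w‖ ≤ M) (hz : z ∈ holConvexHull U K) (k : ℕ)
    (y : Fin n → ℂ) : ‖homogeneousTaylorTerm f k z y‖ ≤ M * (‖y‖ / r) ^ k := by
  have hterm : DifferentiableOn ℂ (fun w => homogeneousTaylorTerm f k w y) U :=
    (differentiableOn_homogeneousTaylorTerm hU hf k).comp (f := fun w => (w, y)) (by fun_prop)
      fun _ hw => ⟨hw, mem_univ _⟩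
  refine norm_le_of_mem_holConvexHull (f := fun w => homogeneousTaylorTerm f k w y) hz hterm
    (by positivity) fun w hw => ?_
  have hball : closedBall w r ⊆ cthickening r K := closedBall_subset_cthickening hw r
  exact norm_homogeneousTaylorTerm_le hr (hf.mono (hball.trans hrU))
    (fun x hx => hfM x (hball hx)) k

theorem extendsHolomorphicallyTo_of_mem_ball_of_mem_holConvexHull (hU : IsOpen U)
    (hf : DifferentiableOn ℂ f U) (hK : IsCompact K) (hrU : cthickening r K ⊆ U)
    (hz : z ∈ holConvexHull U K) (ha : a ∈ ball z r) : ExtendsHolomorphicallyTo U f a := by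
  obtain ⟨M, hM⟩ := hK.cthickening.exists_bound_of_continuousOn (hf.continuousOn.mono hrU)
  exact extendsHolomorphicallyTo_of_norm_homogeneousTaylorTerm_le hU hf hz.1
    (norm_homogeneousTaylorTerm_le_of_mem_holConvexHull hU hf (pos_of_mem_ball ha) hrU
      (le_max_right M 0) (fun w hw => (hM w hw).trans (le_max_left M 0)) hz) ha

theorem closure_holConvexHull_inter_subset :
    closure (holConvexHull U K) ∩ U ⊆ holConvexHull U K := by
  rintro z ⟨hz, hzU⟩
  refine ⟨hzU, fun g hg => ?_⟩
  have hcont : ContinuousWithinAt (fun x => ‖g x‖) (holConvexHull U K) z :=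
    (hg.continuousOn.norm z hzU).mono fun x hx => hx.1
  exact hcont.closure_le hz continuousWithinAt_const fun x hx => hx.2 g hg

theorem isBounded_holConvexHull (hK : Bornology.IsBounded K) :
    Bornology.IsBounded (holConvexHull U K) := by
  obtain ⟨C, hC0, hC⟩ := hK.exists_pos_norm_le
  refine isBounded_iff_forall_norm_le.mpr ⟨C, fun z hz => ?_⟩
  refine (pi_norm_le_iff_of_nonneg hC0.le).mpr fun i => ?_
  exact norm_le_of_mem_holConvexHull (f := fun x => x i) hz (by fun_prop) hC0.le
    fun w hw => (norm_le_pi_norm w i).trans (hC w hw)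

end Hull

theorem isDomainOfHolomorphy_holomorphicallyConvex_general {n : ℕ} {U : Set (Fin n → ℂ)}
    (hU : IsOpen U)
    (h : ∀ a ∈ Uᶜ, ∃ f, DifferentiableOn ℂ f U ∧ ¬ ExtendsHolomorphicallyTo U f a) :
    HolomorphicallyConvex U := by
  intro K hKU hK
  obtain ⟨r, hr, hrU⟩ := hK.exists_cthickening_subset_open hU hKU
  have hball : ∀ z ∈ holConvexHull U K, ball z r ⊆ U := by
    intro z hz a ha
    by_contra haU
    obtain ⟨f, hf, hext⟩ := h a haU
    exact hext (extendsHolomorphicallyTo_of_mem_ball_of_mem_holConvexHull hU hf hK hrU hz ha)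
  have hclosure : closure (holConvexHull U K) ⊆ U := fun z hz => by
    obtain ⟨w, hw, hzw⟩ := Metric.mem_closure_iff.mp hz r hr
    exact hball w hw hzw
  exact isCompact_of_isClosed_isBounded
    (isClosed_of_closure_subset fun z hz => closure_holConvexHull_inter_subset ⟨hz, hclosure hz⟩)
    (isBounded_holConvexHull hK.isBounded)

/-- (Cartan–Thullen) Every domain of holomorphy is holomorphically convex. -/
theorem isDomainOfHolomorphy_holomorphicallyConvex {n : ℕ} (U : Set (Fin n → ℂ))
    (h : IsDomainOfHolomorphy U) : HolomorphicallyConvex U := by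
  obtain ⟨hU, -, f, hf, hext⟩ := h
  exact isDomainOfHolomorphy_holomorphicallyConvex_general hU fun a ha => ⟨f, hf, hext a ha⟩
end
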